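/- For the particular weighting vector w* ∈ ℝ^P defined by w*_p := ‖b_p‖_*^{-1} / Σ_{l∈[P]} ‖b_l‖_*^{-1}, the Strengthened Linear Approximation with κ = 𝟙 := (1,…,1) and the worst-case CVaR approximation have the same x-feasible region: X_SLA(𝟙) = X_WCVaR(w*). -/

import Mathlib

/-!
The weight `w*_p = ‖b_p‖_*⁻¹ / W` turns every constraint `β ≥ w_p ‖b_p‖_*` into `β ≥ 1 / W` and
every loss into `-f_{i,p}(x) / W`, so the substitution `s = -τ W`, `r = α W` converts the CVaR
constraints into the SLA constraints without the quantile condition. That condition costs nothing: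
if `s` exceeds the smallest normalized quantile `c`, then at least `εN` samples have margin at most
`c`, so their slacks `r_i` are at least `s - c`, and lowering `s` to `c` while cutting `r_i` by
`min r_i (s - c)` does not decrease `εN s - ∑ r_i`.
-/

open Finset

section DualNorm

variable {E : Type*} [AddCommGroup E] [Module ℝ E]

/-- The dual norm `‖g‖_* = sup {g u | ν u ≤ 1}` of a linear functional `g` with respect to `ν`.
As a real supremum it is only meaningful when `g` is bounded above on the unit ball of `ν`. -/
noncomputable def dualNorm (ν : Seminorm ℝ E) (g : E →ₗ[ℝ] ℝ) : ℝ :=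
  sSup (g '' {u | ν u ≤ 1})

lemma bddAbove_image_unitBall [FiniteDimensional ℝ E] {ν : Seminorm ℝ E}
    (hν : ∀ u, ν u = 0 → u = 0) (g : E →ₗ[ℝ] ℝ) : BddAbove (g '' {u | ν u ≤ 1}) := by
  let _ : Norm E := ⟨ν⟩
  have core : NormedSpace.Core ℝ E :=
    { norm_nonneg := apply_nonneg ν
      norm_smul := map_smul_eq_mul ν
      norm_triangle := map_add_le_add ν
      norm_eq_zero_iff := fun u => ⟨hν u, fun hu => hu ▸ map_zero ν⟩ }
  let _ : NormedAddCommGroup E := NormedAddCommGroup.ofCore core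
  let _ : NormedSpace ℝ E := NormedSpace.ofCore core
  refine ⟨‖LinearMap.toContinuousLinearMap g‖, ?_⟩
  rintro _ ⟨u, hu, rfl⟩
  exact (le_abs_self _).trans ((LinearMap.toContinuousLinearMap g).unit_le_opNorm u hu)

lemma dualNorm_pos {ν : Seminorm ℝ E} {g : E →ₗ[ℝ] ℝ} (hbdd : BddAbove (g '' {u | ν u ≤ 1}))
    (hg : g ≠ 0) : 0 < dualNorm ν g := by
  obtain ⟨u, hu⟩ : ∃ u, 0 < g u := by
    obtain ⟨u, hu⟩ := DFunLike.ne_iff.1 hg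
    rcases lt_or_gt_of_ne hu with hneg | hpos
    · exact ⟨-u, by rw [map_neg]; exact neg_pos.2 hneg⟩
    · exact ⟨u, hpos⟩
  have hν : 0 < ν u + 1 := add_pos_of_nonneg_of_pos (apply_nonneg ν u) one_pos
  have hball : ν ((ν u + 1)⁻¹ • u) ≤ 1 := by
    rw [map_smul_eq_mul, Real.norm_of_nonneg (inv_nonneg.2 hν.le), inv_mul_le_one₀ hν]
    exact le_add_of_nonneg_right zero_le_one
  calc 0 < (ν u + 1)⁻¹ * g u := mul_pos (inv_pos.2 hν) hu
    _ = g ((ν u + 1)⁻¹ • u) := (map_smul g _ u).symm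
    _ ≤ dualNorm ν g := le_csSup hbdd ⟨_, hball, rfl⟩

end DualNorm

lemma lt_card_filter_le_sort {α : Type*} [LinearOrder α] {n : ℕ} (g : Fin n → α) (k : Fin n) :
    (k : ℕ) < #{i | g i ≤ (g ∘ Tuple.sort g) k} := by
  have hsub : (Iic k).map (Tuple.sort g).toEmbedding ⊆
      ({i | g i ≤ (g ∘ Tuple.sort g) k} : Finset (Fin n)) := by
    intro i hi
    obtain ⟨j, hj, rfl⟩ := mem_map.1 hi
    exact mem_filter.2 ⟨mem_univ _, Tuple.monotone_sort g (mem_Iic.1 hj)⟩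
  calc (k : ℕ) < #(Iic k) := by rw [Fin.card_Iic]; exact Nat.lt_succ_self _
    _ = #((Iic k).map (Tuple.sort g).toEmbedding) := (card_map _).symm
    _ ≤ _ := card_le_card hsub

section Certificate

variable {ι J : Type*} [Fintype ι] {m t s : ℝ} {F : ι → J → ℝ} {r : ι → ℝ}

/-- `(s, r)` satisfies the linear approximation of the chance constraint for the normalized margins
`F i p = f_{i,p}(x)` at a fixed decision `x`. Here `m` and `t` stand for `εN` and `θN`. -/
structure IsLACertificate (m t : ℝ) (F : ι → J → ℝ) (s : ℝ) (r : ι → ℝ) : Prop where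
  slack_nonneg : ∀ i, 0 ≤ r i
  budget : t ≤ m * s - ∑ i, r i
  sub_slack_le : ∀ i p, s - r i ≤ F i p

namespace IsLACertificate

lemma level_nonneg (h : IsLACertificate m t F s r) (hm : 0 < m) (ht : 0 ≤ t) : 0 ≤ s := by
  have hsum : 0 ≤ ∑ i, r i := sum_nonneg fun i _ => h.slack_nonneg i
  exact nonneg_of_mul_nonneg_right (by linarith [h.budget]) hm

lemma lower_level (h : IsLACertificate m t F s r) {c : ℝ} (hcs : c ≤ s) {p : J}
    (hm : m ≤ #{i | F i p ≤ c}) :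
    IsLACertificate m t F c (fun i => r i - min (r i) (s - c)) where
  slack_nonneg i := sub_nonneg.2 (min_le_left _ _)
  sub_slack_le i p' := by linarith [h.sub_slack_le i p', min_le_right (r i) (s - c)]
  budget := by
    have hcut : m * (s - c) ≤ ∑ i, min (r i) (s - c) :=
      calc m * (s - c) ≤ #{i | F i p ≤ c} * (s - c) :=
            mul_le_mul_of_nonneg_right hm (sub_nonneg.2 hcs)
        _ = ∑ i with F i p ≤ c, (s - c) := by rw [sum_const, nsmul_eq_mul]
        _ ≤ ∑ i with F i p ≤ c, min (r i) (s - c) := by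
            refine sum_le_sum fun i hi => le_min ?_ le_rfl
            linarith [h.sub_slack_le i p, (mem_filter.1 hi).2]
        _ ≤ ∑ i, min (r i) (s - c) :=
            sum_le_sum_of_subset_of_nonneg (filter_subset _ _) fun i _ _ =>
              le_min (h.slack_nonneg i) (sub_nonneg.2 hcs)
    rw [sum_sub_distrib]
    linarith [h.budget]

lemma exists_level_le [Finite J] [Nonempty J] (h : IsLACertificate m t F s r) {Q : J → ℝ}
    (hQ : ∀ p, m ≤ #{i | F i p ≤ Q p}) :
    ∃ s' r', IsLACertificate m t F s' r' ∧ ∀ p, s' ≤ Q p := by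
  obtain ⟨p, hp⟩ := Finite.exists_min Q
  rcases le_total s (Q p) with hs | hs
  · exact ⟨s, r, h, fun p' => hs.trans (hp p')⟩
  · exact ⟨Q p, _, h.lower_level hs (hQ p), hp⟩

end IsLACertificate

end Certificate

section Regions

variable {ι J V : Type*} [Fintype ι] {X : Set V} {g : ι → J → ℝ} {c : J → V → ℝ}
  {D q : J → ℝ} {ε θ W : ℝ} {x : V}

/-- The feasible region of the Strengthened Linear Approximation. The values `g i p`, `c p x` and
`D p` stand for `b_p^⊤ξ_i`, `d_p - a_p^⊤x` and `‖b_p‖_*`. -/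
def slaRegion (X : Set V) (g : ι → J → ℝ) (c : J → V → ℝ) (D q : J → ℝ) (ε θ : ℝ)
    (κ : ι → ℝ) : Set V :=
  {x | x ∈ X ∧ ∃ s : ℝ, ∃ r : ι → ℝ, 0 ≤ s ∧ (∀ i, 0 ≤ r i) ∧
    θ * Fintype.card ι ≤ ε * Fintype.card ι * s - ∑ i, r i ∧
    (∀ i p, s - r i ≤ κ i * ((g i p + c p x) / D p)) ∧
    ∀ p, s ≤ (q p + c p x) / D p}

/-- The feasible region of the worst-case CVaR approximation with weights `w`, for data encoded as
in `slaRegion`. -/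
def wcvarRegion (X : Set V) (g : ι → J → ℝ) (c : J → V → ℝ) (D : J → ℝ) (ε θ : ℝ)
    (w : J → ℝ) : Set V :=
  {x | x ∈ X ∧ ∃ α : ι → ℝ, ∃ β τ : ℝ, (∀ i, 0 ≤ α i) ∧
    τ + (1 / ε) * (θ * β + (1 / (Fintype.card ι : ℝ)) * ∑ i, α i) ≤ 0 ∧
    (∀ i p, w p * -(g i p + c p x) - τ ≤ α i) ∧
    ∀ p, w p * D p ≤ β}

lemma mem_slaRegion_one_iff [Nonempty ι] [Finite J] [Nonempty J] (hD : ∀ p, 0 < D p)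
    (hε : 0 < ε) (hθ : 0 ≤ θ) (hq : ∀ p, ε * Fintype.card ι ≤ #{i | g i p ≤ q p}) :
    x ∈ slaRegion X g c D q ε θ (fun _ => 1) ↔
      x ∈ X ∧ ∃ s r, IsLACertificate (ε * Fintype.card ι) (θ * Fintype.card ι)
        (fun i p => (g i p + c p x) / D p) s r := by
  simp only [slaRegion, Set.mem_ofPred_eq, one_mul]
  refine and_congr_right fun _ => ⟨?_, ?_⟩
  · rintro ⟨s, r, -, hr, hbudget, hmargin, -⟩
    exact ⟨s, r, hr, hbudget, hmargin⟩
  · rintro ⟨s, r, h⟩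
    have hQ : ∀ p, ε * Fintype.card ι ≤
        #{i | (g i p + c p x) / D p ≤ (q p + c p x) / D p} := by
      simpa only [div_le_div_iff_of_pos_right (hD _), add_le_add_iff_right] using hq
    obtain ⟨s', r', h', hs'⟩ := h.exists_level_le hQ
    exact ⟨s', r', h'.level_nonneg (by positivity) (by positivity), h'.slack_nonneg, h'.budget,
      h'.sub_slack_le, hs'⟩

lemma wcvar_budget_iff {n A τ : ℝ} (hε : 0 < ε) (hn : 0 < n) (hW : 0 < W) :
    τ + (1 / ε) * (θ * (1 / W) + (1 / n) * A) ≤ 0 ↔ θ * n ≤ ε * n * (-τ * W) - A * W := by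
  have hscale : (τ + (1 / ε) * (θ * (1 / W) + (1 / n) * A)) * (ε * n * W) =
      θ * n - (ε * n * (-τ * W) - A * W) := by
    field_simp
    ring
  rw [← mul_le_mul_iff_left₀ (by positivity : 0 < ε * n * W), hscale, zero_mul, sub_nonpos]

lemma mem_wcvarRegion_inv_div_iff [Nonempty ι] [Nonempty J] (hD : ∀ p, 0 < D p)
    (hε : 0 < ε) (hθ : 0 ≤ θ) (hW : 0 < W) :
    x ∈ wcvarRegion X g c D ε θ (fun p => (D p)⁻¹ / W) ↔
      x ∈ X ∧ ∃ s r, IsLACertificate (ε * Fintype.card ι) (θ * Fintype.card ι)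
        (fun i p => (g i p + c p x) / D p) s r := by
  have hn : (0 : ℝ) < Fintype.card ι := by exact_mod_cast Fintype.card_pos
  have hweight : ∀ p, (D p)⁻¹ / W * D p = 1 / W := fun p => by
    rw [div_mul_eq_mul_div, inv_mul_cancel₀ (hD p).ne']
  have hloss : ∀ i p (α τ : ℝ), (D p)⁻¹ / W * -(g i p + c p x) - τ ≤ α ↔
      -τ * W - α * W ≤ (g i p + c p x) / D p := fun i p α τ => by
    have hrescale : (D p)⁻¹ / W * -(g i p + c p x) = -((g i p + c p x) / D p) / W := by ring
    rw [hrescale, sub_le_iff_le_add, div_le_iff₀ hW]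
    constructor <;> intro h <;> linarith
  simp only [wcvarRegion, Set.mem_ofPred_eq, hweight, hloss]
  refine and_congr_right fun _ => ⟨?_, ?_⟩
  · rintro ⟨α, β, τ, hα, hbudget, hmargin, hβ⟩
    have hbudget' : τ + (1 / ε) * (θ * (1 / W) + (1 / Fintype.card ι) * ∑ i, α i) ≤ 0 :=
      hbudget.trans' (by gcongr; exact hβ (Classical.arbitrary J))
    refine ⟨-τ * W, fun i => α i * W, fun i => mul_nonneg (hα i) hW.le, ?_, hmargin⟩
    rw [← sum_mul]
    exact (wcvar_budget_iff hε hn hW).1 hbudget'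
  · rintro ⟨s, r, h⟩
    refine ⟨fun i => r i / W, 1 / W, -(s / W), fun i => div_nonneg (h.slack_nonneg i) hW.le,
      (wcvar_budget_iff hε hn hW).2 ?_, ?_, fun _ => le_rfl⟩
    · simpa only [neg_neg, sum_mul, div_mul_cancel₀ _ hW.ne'] using h.budget
    · simpa only [neg_neg, div_mul_cancel₀ _ hW.ne'] using h.sub_slack_le

theorem stmt_5_general [Nonempty ι] [Finite J] [Nonempty J] (hD : ∀ p, 0 < D p)
    (hε : 0 < ε) (hθ : 0 ≤ θ) (hW : 0 < W)
    (hq : ∀ p, ε * Fintype.card ι ≤ #{i | g i p ≤ q p}) :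
    slaRegion X g c D q ε θ (fun _ => 1) = wcvarRegion X g c D ε θ (fun p => (D p)⁻¹ / W) :=
  Set.ext fun _ => (mem_slaRegion_one_iff hD hε hθ hq).trans
    (mem_wcvarRegion_inv_div_iff hD hε hθ hW).symm

end Regions

theorem stmt_5
    (N K L P : ℕ) (hN : 0 < N) (hK : 0 < K) (hL : 0 < L) (hP : 0 < P)
    (nrm : (Fin K → ℝ) → ℝ)
    (nrm_eq_zero : ∀ u : Fin K → ℝ, nrm u = 0 ↔ u = 0)
    (nrm_smul : ∀ (c : ℝ) (u : Fin K → ℝ), nrm (c • u) = |c| * nrm u)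
    (nrm_triangle : ∀ u w : Fin K → ℝ, nrm (u + w) ≤ nrm u + nrm w)
    (dstar : (Fin K → ℝ) → ℝ)
    (hdstar : ∀ v : Fin K → ℝ,
      dstar v = sSup ((fun u : Fin K → ℝ => ∑ j, v j * u j) '' {u | nrm u ≤ 1}))
    (ξ : Fin N → Fin K → ℝ)
    (a : Fin P → Fin L → ℝ) (b : Fin P → Fin K → ℝ) (hb : ∀ p, b p ≠ 0)
    (d : Fin P → ℝ)
    (ε θ : ℝ) (hε0 : 0 < ε) (hε1 : ε < 1) (hθ : 0 < θ)
    (k : ℕ) (hk : k = ⌊ε * (N : ℝ)⌋₊) (hkN : k < N)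
    (X : Set (Fin L → ℝ))
    (f : Fin N → Fin P → (Fin L → ℝ) → ℝ)
    (hf : ∀ i p x, f i p x =
      ((∑ j, b p j * ξ i j) + d p - ∑ j, a p j * x j) / dstar (b p))
    (q : Fin P → ℝ)
    (hq : ∀ p, q p =
      ((fun i => ∑ j, b p j * ξ i j) ∘ Tuple.sort (fun i => ∑ j, b p j * ξ i j)) ⟨k, hkN⟩)
    (XSLA : (Fin N → ℝ) → Set (Fin L → ℝ))
    (hXSLA : ∀ κ : Fin N → ℝ, XSLA κ = {x | x ∈ X ∧ ∃ s : ℝ, ∃ r : Fin N → ℝ,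
      0 ≤ s ∧ (∀ i, 0 ≤ r i) ∧
      ε * (N : ℝ) * s - ∑ i, r i ≥ θ * (N : ℝ) ∧
      (∀ i p, κ i * f i p x ≥ s - r i) ∧
      ∀ p, (q p + d p - ∑ j, a p j * x j) / dstar (b p) ≥ s})
    (XWCVaR : (Fin P → ℝ) → Set (Fin L → ℝ))
    (hXWCVaR : ∀ w : Fin P → ℝ, XWCVaR w = {x | x ∈ X ∧ ∃ α : Fin N → ℝ, ∃ β τ : ℝ,
      (∀ i, 0 ≤ α i) ∧
      τ + (1 / ε) * (θ * β + (1 / (N : ℝ)) * ∑ i, α i) ≤ 0 ∧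
      (∀ i p, α i ≥ w p * ((∑ j, a p j * x j) - (∑ j, b p j * ξ i j) - d p) - τ) ∧
      ∀ p, β ≥ w p * dstar (b p)})
    :
    XSLA (fun _ => 1) = XWCVaR (fun p => (dstar (b p))⁻¹ / ∑ l, (dstar (b l))⁻¹) := by
  let ν : Seminorm ℝ (Fin K → ℝ) := Seminorm.of nrm nrm_triangle nrm_smul
  have hD : ∀ p, 0 < dstar (b p) := fun p => by
    rw [hdstar]
    exact dualNorm_pos (ν := ν) (bddAbove_image_unitBall (fun u => (nrm_eq_zero u).1) _)
      ((map_ne_zero_iff (dotProductEquiv ℝ (Fin K)) (LinearEquiv.injective _)).2 (hb p))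
  have hquantile : ∀ p, ε * Fintype.card (Fin N) ≤ #{i | ∑ j, b p j * ξ i j ≤ q p} := fun p => by
    rw [Fintype.card_fin, hq]
    exact (Nat.lt_of_floor_lt (hk ▸ lt_card_filter_le_sort _ ⟨k, hkN⟩)).le
  have : NeZero N := ⟨hN.ne'⟩
  have : NeZero P := ⟨hP.ne'⟩
  have hW : 0 < ∑ l, (dstar (b l))⁻¹ := sum_pos (fun p _ => inv_pos.2 (hD p)) univ_nonempty
  have hregions := stmt_5_general (X := X) (c := fun p x => d p - ∑ j, a p j * x j)
    hD hε0 hθ.le hW hquantile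
  have hloss : ∀ u v w : ℝ, -(u + (v - w)) = w - u - v := fun u v w => by ring
  simpa only [slaRegion, wcvarRegion, hXSLA, hXWCVaR, hf, hloss, ge_iff_le, add_sub_assoc,
    Fintype.card_fin] using hregions
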